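/- Let K = F_2(x)(y) where y satisfies y^2 + (x^3 + x + 1)·y = (x^3 + x + 1)(x^4 + x + 1) (this quadratic polynomial in y is irreducible over F_2(x)). Then the ideal class group Cl(O_K), where O_K is the integral closure of F_2[x] in K, has order 4 (contradicting the earlier published claim that its order is 2). -/

import Mathlib

open Polynomial

/-!
Write `B = x³ + x + 1` and `C = x⁴ + x + 1`, so that `y² + B y = B C`. The ring of integers is
`𝔽₂[x] + 𝔽₂[x] y`: an integral `p + q y` has integral trace `B q` and norm, and `B` is prime and
prime to `C`, which rules out denominators (`exists_poly_of_isIntegral`).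

Every nonzero ideal is a multiple of some `(a, y + b)` where `a` divides the norm of `y + b`
(`IsModel.exists_sameClass_stdIdeal`), and, as for binary quadratic forms, reduction brings the degree
of `a` down to the genus `3` (`IsModel.exists_reduced`). The primes `x`, `x + 1` and `x² + x + 1` are
inert, so only `a = 1`, `a = B` (ramified) and `a = G = x³ + x² + 1` (split) remain (`classify`). This
leaves four candidates: the unit ideal, `P = (B, y)` and the two primes `Q`, `Q'` above `G`.

An element outside `𝔽₂[x]` has norm of degree at least `7`, so none of `P`, `Q`, `Q'` is principal
(`IsModel.isUnit_of_principal`). Since `P² = (B)` and `P Q` is equivalent to `Q'`, the classes of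
`1, P, Q, P Q` are distinct and exhaust the class group (`IsModel.card_classGroup`, `card_eq_four`).
-/

/-! ### Polynomials over `𝔽₂` and the norm form -/

/-- The coefficient `B = x³ + x + 1` of `y`, so that `y² + B y = B C`. -/
noncomputable def pB : (ZMod 2)[X] := X ^ 3 + X + 1
/-- The cofactor `C = x⁴ + x + 1` in `y² + B y = B C`. -/
noncomputable def pC : (ZMod 2)[X] := X ^ 4 + X + 1
/-- The irreducible cubic `G = x³ + x² + 1`, the only irreducible polynomial of degree at most three
that splits in the quadratic extension. -/
noncomputable def pG : (ZMod 2)[X] := X ^ 3 + X ^ 2 + 1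
/-- The norm form: `nm a b` is the norm of `a + b y` down to `𝔽₂[x]`. In particular `nm b 1` is the
norm of `y + b`. -/
noncomputable def nm (a b : (ZMod 2)[X]) : (ZMod 2)[X] := a ^ 2 + a * b * pB + b ^ 2 * (pB * pC)

lemma two_eq_zero_poly : (2 : (ZMod 2)[X]) = 0 := CharTwo.two_eq_zero

lemma natDegree_pB : pB.natDegree = 3 := by unfold pB; compute_degree!
lemma natDegree_pC : pC.natDegree = 4 := by unfold pC; compute_degree!
lemma natDegree_pG : pG.natDegree = 3 := by unfold pG; compute_degree!
lemma pB_ne_zero : pB ≠ 0 := by intro h; have := natDegree_pB; simp [h] at this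
lemma pC_ne_zero : pC ≠ 0 := by intro h; have := natDegree_pC; simp [h] at this
lemma pG_ne_zero : pG ≠ 0 := by intro h; have := natDegree_pG; simp [h] at this

lemma natDegree_pBC : (pB * pC).natDegree = 7 := by
  rw [natDegree_mul pB_ne_zero pC_ne_zero, natDegree_pB, natDegree_pC]

/-- A cubic without roots in `𝔽₂` is prime. -/
lemma prime_cubic {p : (ZMod 2)[X]} (hm : p.Monic) (hd : p.natDegree = 3)
    (h : ∀ t : ZMod 2, p.eval t ≠ 0) : Prime p := by
  apply Irreducible.prime
  rw [hm.irreducible_iff_roots_eq_zero_of_degree_le_three (by omega) (by omega),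
    Multiset.eq_zero_iff_forall_notMem]
  intro t ht
  exact h t (mem_roots'.1 ht).2

lemma prime_pB : Prime pB := by
  refine prime_cubic (by unfold pB; monicity!) natDegree_pB fun t => ?_
  simp only [pB, eval_add, eval_pow, eval_X, eval_one]
  revert t; decide

lemma prime_pG : Prime pG := by
  refine prime_cubic (by unfold pG; monicity!) natDegree_pG fun t => ?_
  simp only [pG, eval_add, eval_pow, eval_X, eval_one]
  revert t; decide

lemma isCoprime_pB_pC : IsCoprime pB pC := by
  refine (prime_pB.irreducible.coprime_iff_not_dvd).2 ?_
  intro h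
  have h1 : pB ∣ X ^ 2 + 1 := by
    have : (X ^ 2 + 1 : (ZMod 2)[X]) = pC - X * pB + (X ^ 2) * 2 := by unfold pB pC; ring
    rw [this, two_eq_zero_poly, mul_zero, add_zero]
    exact dvd_sub h (Dvd.intro_left _ rfl)
  have h2 : (X ^ 2 + 1 : (ZMod 2)[X]).natDegree = 2 := by compute_degree!
  have := natDegree_le_of_dvd h1 (by intro h; simp [h] at h2)
  rw [natDegree_pB] at this; omega

lemma isCoprime_pB_pG : IsCoprime pB pG := by
  refine (prime_pB.irreducible.coprime_iff_not_dvd).2 ?_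
  intro h
  have h1 : pB ∣ X ^ 2 + X := by
    have : (X ^ 2 + X : (ZMod 2)[X]) = pG - pB + X * 2 := by unfold pB pG; ring
    rw [this, two_eq_zero_poly, mul_zero, add_zero]
    exact dvd_sub h dvd_rfl
  have h2 : (X ^ 2 + X : (ZMod 2)[X]).natDegree = 2 := by compute_degree!
  have := natDegree_le_of_dvd h1 (by intro h; simp [h] at h2)
  rw [natDegree_pB] at this; omega

/-- Since `y` has odd degree `7/2` at infinity, the leading terms of `a²` and `b² B C` cannot cancel,
and an element outside `𝔽₂[x]` has norm of degree at least `7`. -/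
lemma seven_le_natDegree_nm (a : (ZMod 2)[X]) {b : (ZMod 2)[X]} (hb : b ≠ 0) :
    7 ≤ (nm a b).natDegree := by
  have h1 : (a ^ 2).natDegree = 2 * a.natDegree := natDegree_pow _ _
  have h2 : (a * b * pB).natDegree ≤ a.natDegree + b.natDegree + 3 := by
    grw [natDegree_mul_le, natDegree_mul_le, natDegree_pB]
  have h3 : (b ^ 2 * (pB * pC)).natDegree = 2 * b.natDegree + 7 := by
    rw [natDegree_mul (pow_ne_zero _ hb) (mul_ne_zero pB_ne_zero pC_ne_zero), natDegree_pBC,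
      natDegree_pow]
  have h4 := natDegree_add_le (a ^ 2) (a * b * pB)
  have h5 := natDegree_add_le (a * b * pB) (b ^ 2 * (pB * pC))
  rcases le_or_gt a.natDegree (b.natDegree + 3) with h | h
  · rw [nm, natDegree_add_eq_right_of_natDegree_lt (by omega)]; omega
  · rw [nm, add_assoc, natDegree_add_eq_left_of_natDegree_lt (by omega)]; omega

lemma nm_one_ne_zero (b : (ZMod 2)[X]) : nm b 1 ≠ 0 := by
  intro h
  have := seven_le_natDegree_nm b one_ne_zero
  simp [h] at this

lemma dvd_nm_shift {a b k : (ZMod 2)[X]} (h : a ∣ nm b 1) : a ∣ nm (b + k * a) 1 := by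
  have : nm (b + k * a) 1 = nm b 1 + a * (k ^ 2 * a + 2 * k * b + k * pB) := by unfold nm; ring
  rw [this]
  exact dvd_add h (Dvd.intro _ rfl)

/-- The primes `x` and `x + 1` are inert: the norm of `y + b` is prime to both. -/
lemma nm_eval_ne (b : (ZMod 2)[X]) (t : ZMod 2) : (nm b 1).eval t ≠ 0 := by
  have : (nm b 1).eval t = b.eval t ^ 2 + b.eval t * (t ^ 3 + t + 1)
      + (t ^ 3 + t + 1) * (t ^ 4 + t + 1) := by
    simp [nm, pB, pC]
  rw [this]
  generalize b.eval t = s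
  clear this
  revert s t; decide

/-- The prime `x² + x + 1` is inert. Modulo it, the norm of `y + (v x + u)` is `(u + 1) x + u`, which
never vanishes. -/
lemma not_dvd_nm_quad (b : (ZMod 2)[X]) : ¬ (X ^ 2 + X + 1 ∣ nm b 1) := by
  intro h
  set H : (ZMod 2)[X] := X ^ 2 + X + 1 with hH
  have hHd : H.natDegree = 2 := by rw [hH]; compute_degree!
  have hH0 : H ≠ 0 := by intro h; simp [h] at hHd
  have hb : b % H = b + (-(b / H)) * H := by
    linear_combination EuclideanDomain.mod_add_div b H
  have h' : H ∣ nm (b % H) 1 := by rw [hb]; exact dvd_nm_shift h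
  have hdeg : (b % H).natDegree < 2 := by
    have hlt : (b % H).natDegree < H.natDegree := natDegree_mod_lt b (by omega)
    omega
  have hr : b % H = C ((b % H).coeff 1) * X + C ((b % H).coeff 0) :=
    eq_X_add_C_of_natDegree_le_one (by omega)
  rw [hr] at h'
  generalize (b % H).coeff 0 = u at h'
  generalize (b % H).coeff 1 = v at h'
  have key : H ∣ C (u + 1) * X + C u := by
    have hu : (C u : (ZMod 2)[X]) ^ 2 = C u := by
      rw [← C_pow]; congr 1; clear h'; revert u; decide
    have hv : (C v : (ZMod 2)[X]) ^ 2 = C v := by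
      rw [← C_pow]; congr 1; clear h'; revert v; decide
    have h2 := two_eq_zero_poly
    -- The cofactor is the quotient of `nm (v X + u) 1` by `X² + X + 1`, using `u² = u`, `v² = v`.
    have : C (u + 1) * X + C u = nm (C v * X + C u) 1
        - H * (X ^ 5 + X ^ 4 + X ^ 3 + 1 + C u * (X + 1) + C v * (X ^ 2 + X)) := by
      simp only [nm, pB, pC, hH, C_add, C_1]
      grind
    rw [this]
    exact dvd_sub h' (Dvd.intro _ rfl)
  have h0 : C (u + 1) * X + C u = 0 := by
    by_contra hne
    have := natDegree_le_of_dvd key hne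
    have h3 : (C (u + 1) * X + C u : (ZMod 2)[X]).natDegree ≤ 1 := natDegree_linear_le
    omega
  have e0 := congrArg (eval 0) h0
  have e1 := congrArg (eval 1) h0
  simp at e0 e1
  clear h0 key h'
  revert e0 e1; revert u; decide

/-- The possible norms of primitive ideals of norm degree at most three. -/
lemma classify {a b : (ZMod 2)[X]} (h0 : a ≠ 0) (hd : a.natDegree ≤ 3) (h : a ∣ nm b 1) :
    a = 1 ∨ a = pB ∨ a = pG := by
  have hev : ∀ t : ZMod 2, a.eval t ≠ 0 := fun t ht =>
    nm_eval_ne b t (by obtain ⟨c, hc⟩ := h; rw [hc, eval_mul, ht, zero_mul])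
  have hs := a.as_sum_range_C_mul_X_pow' (n := 4) (by omega)
  simp only [Finset.sum_range_succ, Finset.sum_range_zero] at hs
  have e0 := hev 0
  have e1 := hev 1
  have hq : a ≠ X ^ 2 + X + 1 := by rintro rfl; exact not_dvd_nm_quad b h
  generalize a.coeff 0 = a0 at hs
  generalize a.coeff 1 = a1 at hs
  generalize a.coeff 2 = a2 at hs
  generalize a.coeff 3 = a3 at hs
  subst hs
  have two : ∀ t : ZMod 2, t = 0 ∨ t = 1 := by decide
  have h11 : (1 + 1 : ZMod 2) = 0 := by decide
  unfold pB pG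
  rcases two a0 with rfl | rfl <;> rcases two a1 with rfl | rfl <;>
    rcases two a2 with rfl | rfl <;> rcases two a3 with rfl | rfl <;> simp [h11] at e0 e1 hq ⊢ <;> grind

/-! ### Ideals of a quadratic order -/

/-- `O` is the free `𝔽₂[x]`-algebra on the basis `1, y` with `y² = B y + B C` (signs are irrelevant in
characteristic two). Working with this characterization keeps the ideal arithmetic independent of
how the ring of integers is built. -/
structure IsModel (O : Type*) [CommRing O] [Algebra (ZMod 2)[X] O] (y : O) : Prop where
  sq : y ^ 2 = algebraMap (ZMod 2)[X] O pB * y + algebraMap (ZMod 2)[X] O (pB * pC)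
  rep : ∀ z : O, ∃ a b : (ZMod 2)[X],
    z = algebraMap (ZMod 2)[X] O a + algebraMap (ZMod 2)[X] O b * y
  indep : ∀ a b : (ZMod 2)[X],
    algebraMap (ZMod 2)[X] O a + algebraMap (ZMod 2)[X] O b * y = 0 → a = 0 ∧ b = 0

/-- Equality of ideal classes: `x I = z J` for some nonzero `x`, `z`. It is stated for all ideals, so
that nonvanishing need not be carried along. -/
def SameClass {O : Type*} [CommRing O] (I J : Ideal O) : Prop :=
  ∃ x z : O, x ≠ 0 ∧ z ≠ 0 ∧ Ideal.span {x} * I = Ideal.span {z} * J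

/-- The ideal `(a, y + b)`. It is primitive of norm `a` when `a ∣ nm b 1`. -/
def stdIdeal {O : Type*} [CommRing O] [Algebra (ZMod 2)[X] O] (y : O) (a b : (ZMod 2)[X]) :
    Ideal O :=
  Ideal.span {algebraMap (ZMod 2)[X] O a, y + algebraMap (ZMod 2)[X] O b}

section
variable {O : Type*} [CommRing O]

lemma SameClass.refl [Nontrivial O] (I : Ideal O) : SameClass I I :=
  ⟨1, 1, one_ne_zero, one_ne_zero, rfl⟩

lemma SameClass.symm {I J : Ideal O} : SameClass I J → SameClass J I := by
  rintro ⟨x, z, hx, hz, h⟩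
  exact ⟨z, x, hz, hx, h.symm⟩

lemma SameClass.trans [IsDomain O] {I J K : Ideal O} :
    SameClass I J → SameClass J K → SameClass I K := by
  rintro ⟨x, z, hx, hz, h⟩ ⟨u, v, hu, hv, h'⟩
  refine ⟨u * x, z * v, mul_ne_zero hu hx, mul_ne_zero hz hv, ?_⟩
  rw [← Ideal.span_singleton_mul_span_singleton, ← Ideal.span_singleton_mul_span_singleton,
    mul_assoc, h, mul_assoc, ← h', ← mul_assoc, ← mul_assoc, mul_comm (Ideal.span {u})]

lemma span_singleton_mul_span_pair (x a b : O) :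
    Ideal.span {x} * Ideal.span {a, b} = Ideal.span {x * a, x * b} := by
  rw [Ideal.span_mul_span', Set.singleton_mul, Set.image_pair]

lemma two_eq_zero_of_algebra [Algebra (ZMod 2)[X] O] : (2 : O) = 0 := by
  have := congrArg (algebraMap (ZMod 2)[X] O) two_eq_zero_poly
  rwa [map_ofNat, map_zero] at this

lemma stdIdeal_shift [Algebra (ZMod 2)[X] O] (y : O) {a b b' : (ZMod 2)[X]}
    (h : a ∣ b' - b) : stdIdeal y a b' = stdIdeal y a b := by
  obtain ⟨k, hk⟩ := h
  have hk' : b' = b + a * k := by linear_combination hk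
  subst hk'
  unfold stdIdeal
  apply le_antisymm <;> rw [Ideal.span_le, Set.insert_subset_iff, Set.singleton_subset_iff] <;>
    refine ⟨Ideal.subset_span (by simp), ?_⟩ <;> rw [SetLike.mem_coe, Ideal.mem_span_pair]
  · exact ⟨algebraMap _ _ k, 1, by simp; ring⟩
  · exact ⟨-algebraMap _ _ k, 1, by simp; ring⟩

lemma stdIdeal_one [Algebra (ZMod 2)[X] O] (y : O) (b : (ZMod 2)[X]) : stdIdeal y 1 b = ⊤ := by
  rw [Ideal.eq_top_iff_one]
  exact Ideal.subset_span (by simp)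

lemma stdIdeal_mul [Algebra (ZMod 2)[X] O] (y : O) {p q : (ZMod 2)[X]} (h : IsCoprime p q)
    (c : (ZMod 2)[X]) : stdIdeal y p c * stdIdeal y q c = stdIdeal y (p * q) c := by
  obtain ⟨u, v, huv⟩ := h
  have huv' := congrArg (algebraMap (ZMod 2)[X] O) huv
  simp only [map_add, map_mul, map_one] at huv'
  unfold stdIdeal
  rw [Ideal.span_pair_mul_span_pair]
  apply le_antisymm
  · rw [Ideal.span_le]
    intro z hz
    rw [SetLike.mem_coe, Ideal.mem_span_pair]
    simp only [Set.mem_insert_iff, Set.mem_singleton_iff] at hz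
    rcases hz with rfl | rfl | rfl | rfl
    · exact ⟨1, 0, by simp⟩
    · exact ⟨0, algebraMap _ _ p, by simp⟩
    · exact ⟨0, algebraMap _ _ q, by simp; ring⟩
    · exact ⟨0, y + algebraMap _ _ c, by simp⟩
  · rw [Ideal.span_le, Set.insert_subset_iff, Set.singleton_subset_iff]
    refine ⟨Ideal.subset_span (by simp), ?_⟩
    set w := y + algebraMap (ZMod 2)[X] O c
    have : w = algebraMap _ _ u * (algebraMap _ _ p * w) +
        algebraMap _ _ v * (w * algebraMap _ _ q) := by
      linear_combination -w * huv'
    have h1 : algebraMap _ _ p * w ∈ Ideal.span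
        {algebraMap _ _ p * algebraMap _ _ q, algebraMap _ _ p * w, w * algebraMap _ _ q, w * w} :=
      Ideal.subset_span (by simp)
    have h2 : w * algebraMap _ _ q ∈ Ideal.span
        {algebraMap _ _ p * algebraMap _ _ q, algebraMap _ _ p * w, w * algebraMap _ _ q, w * w} :=
      Ideal.subset_span (by simp)
    have h3 := Ideal.add_mem _ (Ideal.mul_mem_left _ (algebraMap _ _ u) h1)
      (Ideal.mul_mem_left _ (algebraMap _ _ v) h2)
    rwa [← this] at h3

end

namespace IsModel
variable {O : Type*} [CommRing O] [Algebra (ZMod 2)[X] O] {y : O}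

lemma algebraMap_ne_zero (H : IsModel O y) {a : (ZMod 2)[X]} (ha : a ≠ 0) : algebraMap (ZMod 2)[X] O a ≠ 0 := by
  intro h
  exact ha (H.indep a 0 (by simp [h])).1

lemma eq_and_eq (H : IsModel O y) {a b c d : (ZMod 2)[X]}
    (h : algebraMap (ZMod 2)[X] O a + algebraMap (ZMod 2)[X] O b * y =
      algebraMap (ZMod 2)[X] O c + algebraMap (ZMod 2)[X] O d * y) : a = c ∧ b = d := by
  have := H.indep (a - c) (b - d) (by simp only [map_sub]; linear_combination h)
  exact ⟨sub_eq_zero.1 this.1, sub_eq_zero.1 this.2⟩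

lemma add_ne_zero (H : IsModel O y) (b : (ZMod 2)[X]) : y + algebraMap (ZMod 2)[X] O b ≠ 0 := by
  intro h
  have := H.indep b 1 (by rw [map_one]; linear_combination h)
  exact one_ne_zero this.2

/-- The conjugate of `y + b` is `y + B + b`. -/
lemma conj_mul (H : IsModel O y) (b : (ZMod 2)[X]) :
    (y + algebraMap (ZMod 2)[X] O (b + pB)) * (y + algebraMap (ZMod 2)[X] O b) =
      algebraMap (ZMod 2)[X] O (nm b 1) := by
  have h2 : (2 : O) = 0 := two_eq_zero_of_algebra
  have := H.sq
  simp only [nm, map_add, map_mul, map_pow, map_one] at this ⊢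
  linear_combination this + (y * algebraMap (ZMod 2)[X] O b + y * algebraMap (ZMod 2)[X] O pB) * h2

/-- Reduction step: multiplying `(a, y + b)` by the conjugate of `y + b`, whose norm is `a a'`,
gives `a · (a', y + B + b)`. -/
lemma sameClass_red (H : IsModel O y) {a a' b : (ZMod 2)[X]} (ha : a ≠ 0) (h : nm b 1 = a * a') :
    SameClass (stdIdeal y a b) (stdIdeal y a' (b + pB)) := by
  refine ⟨_, _, H.add_ne_zero (b + pB), H.algebraMap_ne_zero ha, ?_⟩
  unfold stdIdeal
  rw [span_singleton_mul_span_pair, span_singleton_mul_span_pair, H.conj_mul, h, map_mul,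
    mul_comm (y + _), Ideal.span_pair_comm]

lemma nm_mul (H : IsModel O y) {a b a₁ b₁ a₂ b₂ : (ZMod 2)[X]}
    (h : algebraMap (ZMod 2)[X] O a + algebraMap (ZMod 2)[X] O b * y =
      (algebraMap (ZMod 2)[X] O a₁ + algebraMap (ZMod 2)[X] O b₁ * y) *
      (algebraMap (ZMod 2)[X] O a₂ + algebraMap (ZMod 2)[X] O b₂ * y)) :
    nm a b = nm a₁ b₁ * nm a₂ b₂ := by
  have h1 : algebraMap (ZMod 2)[X] O a + algebraMap (ZMod 2)[X] O b * y =
      algebraMap (ZMod 2)[X] O (a₁ * a₂ + b₁ * b₂ * (pB * pC)) +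
      algebraMap (ZMod 2)[X] O (a₁ * b₂ + a₂ * b₁ + b₁ * b₂ * pB) * y := by
    have := H.sq
    simp only [map_add, map_mul] at this ⊢
    linear_combination h + algebraMap (ZMod 2)[X] O b₁ * algebraMap (ZMod 2)[X] O b₂ * this
  obtain ⟨rfl, rfl⟩ := H.eq_and_eq h1
  have h2 := two_eq_zero_poly
  unfold nm
  generalize pB = B
  generalize pC = D
  grind

/-- A primitive ideal of norm degree between one and three is not principal: a generator would have norm
of degree at most six, hence lie in `𝔽₂[x]`, and it divides `y + b`, so it would be a unit. -/
lemma isUnit_of_principal (H : IsModel O y) {a b : (ZMod 2)[X]} (ha : a ≠ 0) (hd : a.natDegree ≤ 3)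
    (hab : a ∣ nm b 1) {α : O} (h : stdIdeal y a b = Ideal.span {α}) : IsUnit a := by
  obtain ⟨s, t, rfl⟩ := H.rep α
  have h1 : algebraMap (ZMod 2)[X] O a ∈ stdIdeal y a b := Ideal.subset_span (by simp)
  have h2 : y + algebraMap (ZMod 2)[X] O b ∈ stdIdeal y a b := Ideal.subset_span (by simp)
  rw [h, Ideal.mem_span_singleton] at h1 h2
  obtain ⟨γ, hγ⟩ := h1
  obtain ⟨s', t', rfl⟩ := H.rep γ
  have hn : nm a 0 = nm s t * nm s' t' := H.nm_mul (by rw [← hγ]; simp)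
  have ht : t = 0 := by
    by_contra ht
    have h3 := seven_le_natDegree_nm s ht
    have h4 : nm a 0 = a ^ 2 := by simp [nm]
    have h5 := natDegree_le_of_dvd (Dvd.intro _ (hn.symm.trans h4)) (pow_ne_zero 2 ha)
    rw [natDegree_pow] at h5
    omega
  subst ht
  obtain ⟨δ, hδ⟩ := h2
  obtain ⟨u, v, rfl⟩ := H.rep δ
  have h6 : (1 : (ZMod 2)[X]) = s * v := by
    refine (H.eq_and_eq (a := b) (c := s * u) ?_).2
    simp only [map_mul, map_one, map_zero] at hδ ⊢
    linear_combination hδ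
  have htop : (1 : O) ∈ stdIdeal y a b := by
    rw [h, Ideal.mem_span_singleton]
    refine ⟨algebraMap _ _ v, ?_⟩
    rw [map_zero, zero_mul, add_zero, ← map_mul, ← h6, map_one]
  obtain ⟨e, f, hef⟩ := Ideal.mem_span_pair.1 htop
  obtain ⟨k, hk⟩ := hab
  have h7 : algebraMap (ZMod 2)[X] O a ∣ y + algebraMap (ZMod 2)[X] O (b + pB) := by
    refine ⟨e * (y + algebraMap (ZMod 2)[X] O (b + pB)) + f * algebraMap _ _ k, ?_⟩
    have := H.conj_mul b
    rw [hk, map_mul] at this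
    linear_combination -(y + algebraMap (ZMod 2)[X] O (b + pB)) * hef + f * this
  obtain ⟨ε, hε⟩ := h7
  obtain ⟨u', v', rfl⟩ := H.rep ε
  refine IsUnit.of_mul_eq_one v' (H.eq_and_eq (a := a * u') (c := b + pB) ?_).2
  simp only [map_mul, map_one] at hε ⊢
  linear_combination -hε

/-- Every nonzero ideal is `d · (a, y + b)` with `a ∣ nm b 1`. -/
lemma exists_sameClass_stdIdeal (H : IsModel O y) [IsDomain O] {I : Ideal O} (hI : I ≠ ⊥) :
    ∃ a b : (ZMod 2)[X], a ≠ 0 ∧ a ∣ nm b 1 ∧ SameClass I (stdIdeal y a b) := by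
  -- `V` is the ideal of `y`-coordinates of elements of `I`; its generator is `d`, while `I ∩ 𝔽₂[x]`
  -- is generated by `e = d a`.
  let V : Ideal (ZMod 2)[X] :=
    { carrier := {v | ∃ u, algebraMap (ZMod 2)[X] O u + algebraMap (ZMod 2)[X] O v * y ∈ I}
      zero_mem' := ⟨0, by simp⟩
      add_mem' := by
        rintro v v' ⟨u, hu⟩ ⟨u', hu'⟩
        refine ⟨u + u', ?_⟩
        convert I.add_mem hu hu' using 1
        simp only [map_add]; ring
      smul_mem' := by
        rintro r v ⟨u, hu⟩
        refine ⟨r * u, ?_⟩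
        convert I.mul_mem_left (algebraMap _ _ r) hu using 1
        simp only [map_mul, smul_eq_mul]; ring }
  obtain ⟨d, hd⟩ := (IsPrincipalIdealRing.principal V).principal
  obtain ⟨e, he⟩ := (IsPrincipalIdealRing.principal (I.comap (algebraMap (ZMod 2)[X] O))).principal
  have hV : ∀ v, d ∣ v ↔ ∃ u, algebraMap (ZMod 2)[X] O u + algebraMap (ZMod 2)[X] O v * y ∈ I := by
    intro v
    rw [← Ideal.mem_span_singleton]
    change v ∈ Submodule.span _ {d} ↔ _
    rw [← hd]; rfl
  have hE : ∀ v, e ∣ v ↔ algebraMap (ZMod 2)[X] O v ∈ I := by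
    intro v
    rw [← Ideal.mem_comap, ← Ideal.mem_span_singleton]
    change v ∈ Submodule.span _ {e} ↔ _
    rw [← he]
  obtain ⟨u, hu⟩ := (hV d).1 dvd_rfl
  have heI := (hE e).1 dvd_rfl
  obtain ⟨a, rfl⟩ : d ∣ e := (hV e).2 ⟨0, by
    rw [map_zero, zero_add]; exact I.mul_mem_right _ heI⟩
  have hdu : d ∣ u + d * pB := by
    refine (hV _).2 ⟨d * (pB * pC), ?_⟩
    convert I.mul_mem_left y hu using 1
    have := H.sq
    simp only [map_mul, map_add] at this ⊢
    linear_combination -algebraMap _ _ d * this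
  obtain ⟨b, rfl⟩ : d ∣ u := (dvd_add_left (Dvd.intro _ rfl)).1 hdu
  have hu' : algebraMap (ZMod 2)[X] O d * (y + algebraMap _ _ b) ∈ I := by
    convert hu using 1; simp only [map_mul]; ring
  have hIeq : I = Ideal.span {algebraMap (ZMod 2)[X] O d} * stdIdeal y a b := by
    rw [stdIdeal, span_singleton_mul_span_pair]
    apply le_antisymm
    · intro z hz
      obtain ⟨p, q, rfl⟩ := H.rep z
      obtain ⟨w, rfl⟩ := (hV q).2 ⟨p, hz⟩
      have h1 : algebraMap (ZMod 2)[X] O (p - d * b * w) ∈ I := by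
        convert I.sub_mem hz (I.mul_mem_left (algebraMap _ _ w) hu) using 1
        simp only [map_mul, map_sub]; ring
      obtain ⟨k, hk⟩ := (hE _).2 h1
      rw [Ideal.mem_span_pair]
      refine ⟨algebraMap _ _ k, algebraMap _ _ w, ?_⟩
      have hk' := congrArg (algebraMap (ZMod 2)[X] O) hk
      simp only [map_mul, map_sub] at hk' ⊢
      linear_combination -hk'
    · rw [Ideal.span_le, Set.insert_subset_iff, Set.singleton_subset_iff]
      exact ⟨by rw [← map_mul]; exact heI, hu'⟩
  have hd0 : d ≠ 0 := by
    rintro rfl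
    apply hI
    rw [hIeq]; simp
  have h1 : algebraMap (ZMod 2)[X] O (d * nm b 1) ∈ I := by
    rw [map_mul, ← H.conj_mul]
    convert I.mul_mem_left (y + algebraMap (ZMod 2)[X] O (b + pB)) hu' using 1
    ring
  refine ⟨a, b, ?_, ?_, 1, _, one_ne_zero, H.algebraMap_ne_zero hd0, by
    rw [Ideal.span_singleton_one, Ideal.top_mul]; exact hIeq⟩
  · rintro rfl
    have := (hE _).2 h1
    rw [mul_zero, zero_dvd_iff] at this
    exact mul_ne_zero hd0 (nm_one_ne_zero b) this
  · have h1 : algebraMap (ZMod 2)[X] O (d * nm b 1) ∈ I := by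
      rw [map_mul, ← H.conj_mul]
      convert I.mul_mem_left (y + algebraMap (ZMod 2)[X] O (b + pB)) hu' using 1
      ring
    exact (mul_dvd_mul_iff_left hd0).1 ((hE _).2 h1)

/-- Alternating reduction of `b` modulo `a` with `sameClass_red` lowers the degree of `a` as long as it
is at least four, because `nm b 1` then has degree at most `max 7 (2 deg b) < 2 deg a`. -/
lemma exists_reduced (H : IsModel O y) [IsDomain O] (n : ℕ) : ∀ a b : (ZMod 2)[X], a.natDegree = n → a ≠ 0 →
    a ∣ nm b 1 → ∃ a' b' : (ZMod 2)[X], a'.natDegree ≤ 3 ∧ a' ≠ 0 ∧ a' ∣ nm b' 1 ∧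
      SameClass (stdIdeal y a b) (stdIdeal y a' b') := by
  induction n using Nat.strong_induction_on with
  | _ n ih =>
  intro a b hn ha hab
  rcases Nat.lt_or_ge 3 n with h3 | h3
  swap
  · exact ⟨a, b, by omega, ha, hab, SameClass.refl _⟩
  have hmod : b % a = b + (-(b / a)) * a := by
    linear_combination EuclideanDomain.mod_add_div b a
  have hab' : a ∣ nm (b % a) 1 := by rw [hmod]; exact dvd_nm_shift hab
  have hlt : (b % a).natDegree < a.natDegree := natDegree_mod_lt b (by omega)
  have hsh : stdIdeal y a b = stdIdeal y a (b % a) :=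
    stdIdeal_shift y ⟨b / a, by linear_combination -hmod⟩
  rw [hsh]
  generalize b % a = c at hab' hlt
  have hne := nm_one_ne_zero c
  have hdeg : (nm c 1).natDegree < 2 * n := by
    unfold nm
    have h1 : (c ^ 2).natDegree = 2 * c.natDegree := natDegree_pow _ _
    have h2 : (c * 1 * pB).natDegree ≤ c.natDegree + 3 := by
      rw [mul_one]; grw [natDegree_mul_le, natDegree_pB]
    have h3 : (1 ^ 2 * (pB * pC)).natDegree = 7 := by rw [one_pow, one_mul, natDegree_pBC]
    have h4 := natDegree_add_le (c ^ 2 + c * 1 * pB) (1 ^ 2 * (pB * pC))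
    have h5 := natDegree_add_le (c ^ 2) (c * 1 * pB)
    omega
  obtain ⟨a', ha'⟩ := hab'
  have ha'0 : a' ≠ 0 := by rintro rfl; simp [ha'] at hne
  have hsum : (nm c 1).natDegree = a.natDegree + a'.natDegree := by
    rw [ha', natDegree_mul ha ha'0]
  have hdvd : a' ∣ nm (c + pB) 1 := by
    have : nm (c + pB) 1 = nm c 1 := by
      have h2 := two_eq_zero_poly
      unfold nm
      linear_combination (c * pB + pB ^ 2) * h2
    rw [this, ha']; exact Dvd.intro_left _ rfl
  obtain ⟨a'', b'', h1, h2, h3, h4⟩ := ih a'.natDegree (by omega) a' (c + pB) rfl ha'0 hdvd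
  exact ⟨a'', b'', h1, h2, h3, (H.sameClass_red ha ha').trans h4⟩

end IsModel

/-! ### The four ideal classes -/

lemma card_eq_four {G : Type*} [CommGroup G] {p q : G} (hpp : p * p = 1) (hp : p ≠ 1) (hq : q ≠ 1)
    (hpq : p * q ≠ 1) (h : ∀ c : G, c = 1 ∨ c = p ∨ c = q ∨ c = p * q) : Nat.card G = 4 := by
  classical
  have hne : p ≠ q := by rintro rfl; exact hpq hpp
  have huniv : (Set.univ : Set G) = (({1, p, q, p * q} : Finset G) : Set G) := by
    ext c; simpa using h c
  rw [← Set.ncard_univ, huniv, Set.ncard_coe_finset]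
  have h1 : p ≠ p * q := fun h => hq (by simpa using h.symm)
  have h2 : q ≠ p * q := fun h => hp (by simpa using h.symm)
  rw [Finset.card_insert_of_notMem, Finset.card_insert_of_notMem, Finset.card_insert_of_notMem,
    Finset.card_singleton]
  · simpa using h2
  · simpa using ⟨hne, hq⟩
  · simpa using ⟨hp.symm, hq.symm, hpq.symm⟩

namespace IsModel
variable {O : Type*} [CommRing O] [Algebra (ZMod 2)[X] O] {y : O}

lemma stdIdeal_ne_bot (H : IsModel O y) {a b : (ZMod 2)[X]} (ha : a ≠ 0) : stdIdeal y a b ≠ ⊥ := by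
  intro h
  have h1 : algebraMap (ZMod 2)[X] O a ∈ stdIdeal y a b := Ideal.subset_span (by simp)
  rw [h, Ideal.mem_bot] at h1
  exact H.algebraMap_ne_zero ha h1

/-- The prime above `B` is ramified: `(B, y)² = (B)`, because `B` and `C` are coprime. -/
lemma ramified_sq (H : IsModel O y) : stdIdeal y pB 0 * stdIdeal y pB 0 =
    Ideal.span {algebraMap (ZMod 2)[X] O pB} := by
  obtain ⟨u, v, huv⟩ := isCoprime_pB_pC
  have huv' := congrArg (algebraMap (ZMod 2)[X] O) huv
  have hsq := H.sq
  simp only [map_add, map_mul, map_one] at huv' hsq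
  unfold stdIdeal
  rw [Ideal.span_pair_mul_span_pair, map_zero, add_zero]
  apply le_antisymm
  · rw [Ideal.span_le]
    intro z hz
    rw [SetLike.mem_coe, Ideal.mem_span_singleton]
    simp only [Set.mem_insert_iff, Set.mem_singleton_iff] at hz
    rcases hz with rfl | rfl | rfl | rfl
    · exact ⟨_, rfl⟩
    · exact ⟨_, rfl⟩
    · exact ⟨y, mul_comm _ _⟩
    · exact ⟨y + algebraMap _ _ pC, by linear_combination hsq⟩
  · rw [Ideal.span_singleton_le_iff_mem]
    set β := algebraMap (ZMod 2)[X] O pB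
    have h1 : β * β ∈ Ideal.span {β * β, β * y, y * β, y * y} := Ideal.subset_span (by simp)
    have h2 : β * y ∈ Ideal.span {β * β, β * y, y * β, y * y} := Ideal.subset_span (by simp)
    have h3 : y * y ∈ Ideal.span {β * β, β * y, y * β, y * y} := Ideal.subset_span (by simp)
    have h4 := Ideal.add_mem _ (Ideal.mul_mem_left _ (algebraMap _ _ u) h1)
      (Ideal.mul_mem_left _ (algebraMap _ _ v) (Ideal.sub_mem _ h3 h2))
    convert h4 using 1
    linear_combination -β * huv' - algebraMap _ _ v * hsq

/-- The product of the prime above `B` and one prime above `G` is equivalent to the other prime above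
`G`. -/
lemma product_rel (H : IsModel O y) [IsDomain O] : SameClass (stdIdeal y pB 0 * stdIdeal y pG (X + 1))
    (stdIdeal y pG (X + 1 + pB)) := by
  have h2 := two_eq_zero_poly
  -- `B (X² + X)` is `0` modulo `B` and `X + 1` modulo `G`, so the product is
  -- `(B G, y + B (X² + X))`, to which two reduction steps apply.
  have e1 : stdIdeal y pB 0 = stdIdeal y pB (pB * (X ^ 2 + X)) :=
    (stdIdeal_shift y ⟨X ^ 2 + X, by ring⟩).symm
  have e2 : stdIdeal y pG (X + 1) = stdIdeal y pG (pB * (X ^ 2 + X)) :=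
    (stdIdeal_shift y ⟨X ^ 2 + 1, by unfold pB pG; grind⟩).symm
  rw [e1, e2, stdIdeal_mul y isCoprime_pB_pG]
  have r1 := H.sameClass_red (a := pB * pG) (a' := X ^ 4 + X ^ 3 + 1) (b := pB * (X ^ 2 + X))
    (mul_ne_zero pB_ne_zero pG_ne_zero) (by unfold nm pB pC pG; grind)
  have r2 := H.sameClass_red (a := X ^ 4 + X ^ 3 + 1) (a' := pG) (b := X + 1)
    (by
      intro h
      have : (X ^ 4 + X ^ 3 + 1 : (ZMod 2)[X]).natDegree = 4 := by compute_degree!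
      simp [h] at this)
    (by unfold nm pB pC pG; grind)
  have e3 : stdIdeal y (X ^ 4 + X ^ 3 + 1) (pB * (X ^ 2 + X) + pB) =
      stdIdeal y (X ^ 4 + X ^ 3 + 1) (X + 1) :=
    stdIdeal_shift y ⟨X, by unfold pB; grind⟩
  rw [e3] at r1
  exact r1.trans r2

/-- The reduced ideals: the unit ideal, the prime above `B`, and the two primes above `G`. -/
lemma stdIdeal_cases {a b : (ZMod 2)[X]} (h0 : a ≠ 0) (hd : a.natDegree ≤ 3) (h : a ∣ nm b 1) :
    stdIdeal y a b = ⊤ ∨ stdIdeal y a b = stdIdeal y pB 0 ∨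
    stdIdeal y a b = stdIdeal y pG (X + 1) ∨ stdIdeal y a b = stdIdeal y pG (X + 1 + pB) := by
  have h2 := two_eq_zero_poly
  rcases classify h0 hd h with rfl | rfl | rfl
  · exact Or.inl (stdIdeal_one y b)
  · refine Or.inr (Or.inl (stdIdeal_shift y ?_))
    have h3 : pB ∣ b ^ 2 := by
      have : b ^ 2 = nm b 1 - pB * (b + pC) := by unfold nm; ring
      rw [this]; exact dvd_sub h (Dvd.intro _ rfl)
    simpa using prime_pB.dvd_of_dvd_pow h3
  · have h3 : pG ∣ (b - (X + 1)) * (b - (X + 1 + pB)) := by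
      have : (b - (X + 1)) * (b - (X + 1 + pB)) = nm b 1 - pG * (X ^ 4 + X ^ 3 + 1) := by
        unfold nm pB pC pG; grind
      rw [this]; exact dvd_sub h (Dvd.intro _ rfl)
    rcases prime_pG.dvd_or_dvd h3 with h4 | h4
    · exact Or.inr (Or.inr (Or.inl (stdIdeal_shift y h4)))
    · exact Or.inr (Or.inr (Or.inr (stdIdeal_shift y h4)))

theorem card_classGroup (H : IsModel O y) [IsDedekindDomain O] : Nat.card (ClassGroup O) = 4 := by
  have hmk : ∀ {I J : Ideal O} (hI : I ∈ nonZeroDivisors (Ideal O))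
      (hJ : J ∈ nonZeroDivisors (Ideal O)),
      SameClass I J → ClassGroup.mk0 ⟨I, hI⟩ = ClassGroup.mk0 ⟨J, hJ⟩ := by
    rintro I J hI hJ ⟨x, z, hx, hz, h⟩
    exact ClassGroup.mk0_eq_mk0_iff.2 ⟨x, z, hx, hz, h⟩
  have hnz : ∀ {a : (ZMod 2)[X]} (b) (_ : a ≠ 0), stdIdeal y a b ∈ nonZeroDivisors (Ideal O) :=
    fun b ha => mem_nonZeroDivisors_of_ne_zero (H.stdIdeal_ne_bot ha)
  have hne : ∀ {a : (ZMod 2)[X]} (b) (ha : a ≠ 0), a.natDegree = 3 → a ∣ nm b 1 →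
      ClassGroup.mk0 ⟨_, hnz b ha⟩ ≠ 1 := by
    intro a b ha hd hab h
    obtain ⟨α, hα⟩ := ((ClassGroup.mk0_eq_one_iff _).1 h).principal
    have := natDegree_eq_zero_of_isUnit (H.isUnit_of_principal ha hd.le hab hα)
    omega
  have h2 := two_eq_zero_poly
  have hnG : nm (X + 1) 1 = pG * (X ^ 4 + X ^ 3 + 1) := by unfold nm pB pC pG; grind
  have hnG' : nm (X + 1 + pB) 1 = pG * (X ^ 4 + X ^ 3 + 1) := by unfold nm pB pC pG; grind
  have hpq : ClassGroup.mk0 ⟨_, hnz 0 pB_ne_zero⟩ * ClassGroup.mk0 ⟨_, hnz (X + 1) pG_ne_zero⟩ =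
      ClassGroup.mk0 ⟨_, hnz (X + 1 + pB) pG_ne_zero⟩ := by
    rw [← map_mul]
    exact hmk _ _ H.product_rel
  refine card_eq_four (p := ClassGroup.mk0 ⟨_, hnz 0 pB_ne_zero⟩)
    (q := ClassGroup.mk0 ⟨_, hnz (X + 1) pG_ne_zero⟩) ?_ ?_ ?_ ?_ ?_
  · rw [← map_mul, MulMemClass.mk_mul_mk]
    refine (ClassGroup.mk0_eq_one_iff _).2 ?_
    rw [H.ramified_sq]
    exact ⟨_, rfl⟩
  · exact hne _ pB_ne_zero natDegree_pB ⟨pC, by unfold nm; ring⟩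
  · exact hne _ pG_ne_zero natDegree_pG ⟨_, hnG⟩
  · rw [hpq]
    exact hne _ pG_ne_zero natDegree_pG ⟨_, hnG'⟩
  · intro c
    obtain ⟨⟨I, hI⟩, rfl⟩ := ClassGroup.mk0_surjective c
    obtain ⟨a, b, ha, hab, hs⟩ := H.exists_sameClass_stdIdeal (nonZeroDivisors.ne_zero hI)
    obtain ⟨a', b', hd, ha', hab', hs'⟩ := H.exists_reduced _ a b rfl ha hab
    rw [hpq, hmk hI (hnz b' ha') (hs.trans hs')]
    rcases stdIdeal_cases (y := y) ha' hd hab' with h | h | h | h <;> simp only [h]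
    · left
      exact (ClassGroup.mk0_eq_one_iff _).2 ⟨1, by simp⟩
    · simp
    · simp
    · simp

end IsModel

/-! ### The ring of integers -/

/-- `𝔽₂[x] + 𝔽₂[x] y` is integrally closed: if the trace `B q` and the norm of `p + q y` are integral,
then `p` and `q` are polynomials. The only possible denominator is `B`, and it is excluded because
`B` is prime and does not divide `C`. -/
lemma exists_poly_of_isIntegral {p q : RatFunc (ZMod 2)}
    (ht : IsIntegral (ZMod 2)[X] (algebraMap (ZMod 2)[X] (RatFunc (ZMod 2)) pB * q))
    (hn : IsIntegral (ZMod 2)[X] (p ^ 2 + p * q * algebraMap (ZMod 2)[X] (RatFunc (ZMod 2)) pB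
      + q ^ 2 * algebraMap (ZMod 2)[X] (RatFunc (ZMod 2)) (pB * pC))) :
    ∃ a b : (ZMod 2)[X], p = algebraMap _ _ a ∧ q = algebraMap _ _ b := by
  obtain ⟨t, ht⟩ := IsIntegrallyClosed.isIntegral_iff.1 ht
  obtain ⟨n, hn⟩ := IsIntegrallyClosed.isIntegral_iff.1 hn
  have hinj : Function.Injective (algebraMap (ZMod 2)[X] (RatFunc (ZMod 2))) :=
    IsFractionRing.injective _ _
  have hB0 : algebraMap (ZMod 2)[X] (RatFunc (ZMod 2)) pB ≠ 0 := by
    rw [Ne, map_eq_zero_iff _ hinj]; exact pB_ne_zero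
  set φ := algebraMap (ZMod 2)[X] (RatFunc (ZMod 2)) with hφ
  rw [map_mul] at hn
  have hs : IsIntegral (ZMod 2)[X] (φ pB * p) := by
    -- With `t = B q` and `n` the norm, `s = B p` satisfies `s² + B t s + B C t² = B² n`.
    refine ⟨X ^ 2 + (C (pB * t) * X + C (pB * pC * t ^ 2 - pB ^ 2 * n)),
      monic_X_pow_add (by compute_degree!), ?_⟩
    simp only [eval₂_add, eval₂_mul, eval₂_pow, eval₂_X, eval₂_C]
    simp only [← hφ, map_sub, map_mul, map_pow, ht, hn]
    ring
  obtain ⟨s, hs⟩ := IsIntegrallyClosed.isIntegral_iff.1 hs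
  rw [← hφ] at hs
  have key : s ^ 2 + pB * t * s + pB * pC * t ^ 2 = pB ^ 2 * n := by
    apply hinj
    simp only [map_add, map_mul, map_pow, hs, ht, hn]
    ring
  obtain ⟨a, rfl⟩ : pB ∣ s := prime_pB.dvd_of_dvd_pow (n := 2)
    ⟨pB * n - t * s - pC * t ^ 2, by linear_combination key⟩
  have key2 : pC * t ^ 2 = pB * (n - a ^ 2 - t * a) :=
    mul_left_cancel₀ pB_ne_zero (by linear_combination key)
  obtain ⟨b, rfl⟩ : pB ∣ t := prime_pB.dvd_of_dvd_pow (n := 2)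
    (isCoprime_pB_pC.dvd_of_dvd_mul_left ⟨_, key2⟩)
  refine ⟨a, b, ?_, ?_⟩
  · exact mul_left_cancel₀ hB0 (by rw [← hs, hφ, map_mul])
  · exact mul_left_cancel₀ hB0 (by rw [← ht, hφ, map_mul])

section
variable (f : (RatFunc (ZMod 2))[X])

lemma isSeparable_adjoinRoot [Fact (Irreducible f)] (hd : derivative f ≠ 0) :
    Algebra.IsSeparable (RatFunc (ZMod 2)) (AdjoinRoot f) := by
  have hirr : Irreducible f := Fact.out
  have hsep : f.Separable := (separable_iff_derivative_ne_zero hirr).2 hd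
  have h1 : IsSeparable (RatFunc (ZMod 2)) (AdjoinRoot.root f) :=
    Separable.of_dvd hsep (minpoly.dvd _ _ (by simp [AdjoinRoot.aeval_eq]))
  have h2 := (IntermediateField.isSeparable_adjoin_simple_iff_isSeparable (RatFunc (ZMod 2))
    (AdjoinRoot f)).2 h1
  rw [IntermediateField.adjoin_root_eq_top] at h2
  exact AlgEquiv.Algebra.isSeparable IntermediateField.topEquiv

lemma adjoinRoot_rep (hm : f.Monic) (hd : f.natDegree = 2) (z : AdjoinRoot f) :
    ∃ p q : RatFunc (ZMod 2), z = AdjoinRoot.of f p + AdjoinRoot.of f q * AdjoinRoot.root f := by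
  obtain ⟨g, rfl⟩ := AdjoinRoot.mk_surjective z
  have h1 : AdjoinRoot.mk f g = AdjoinRoot.mk f (g %ₘ f) := by
    rw [AdjoinRoot.mk_eq_mk]
    exact ⟨g /ₘ f, by linear_combination -modByMonic_add_div g f⟩
  have h2 : (g %ₘ f).natDegree < f.natDegree := natDegree_modByMonic_lt g hm (by
    rintro rfl; simp at hd)
  refine ⟨(g %ₘ f).coeff 0, (g %ₘ f).coeff 1, ?_⟩
  rw [h1]
  conv_lhs => rw [eq_X_add_C_of_natDegree_le_one (p := g %ₘ f) (by omega)]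
  simp [add_comm]

lemma adjoinRoot_indep (hd : f.natDegree = 2) {p q : RatFunc (ZMod 2)}
    (h : AdjoinRoot.of f p + AdjoinRoot.of f q * AdjoinRoot.root f = 0) : p = 0 ∧ q = 0 := by
  have h1 : AdjoinRoot.mk f (C q * X + C p) = 0 := by
    rw [← h]; simp [add_comm]
  rw [AdjoinRoot.mk_eq_zero] at h1
  have h2 : C q * X + C p = 0 := by
    by_contra hne
    have := natDegree_le_of_dvd h1 hne
    have h3 : (C q * X + C p).natDegree ≤ 1 := natDegree_linear_le
    omega
  have e0 := congrArg (coeff · 0) h2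
  have e1 := congrArg (coeff · 1) h2
  simp at e0 e1
  exact ⟨e0, e1⟩

end

theorem class_group_statement_17
    (f : Polynomial (RatFunc (ZMod 2)))
    (hf : f = X ^ 2 + C (RatFunc.X ^ 3 + RatFunc.X + 1) * X - C ((RatFunc.X ^ 3 + RatFunc.X + 1) * (RatFunc.X ^ 4 + RatFunc.X + 1)))
    [Fact (Irreducible f)] :
    Nat.card (ClassGroup (FunctionField.ringOfIntegers (ZMod 2) (AdjoinRoot f))) = 4 := by
  have hinj : Function.Injective (algebraMap (ZMod 2)[X] (RatFunc (ZMod 2))) :=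
    IsFractionRing.injective _ _
  have hB : (RatFunc.X ^ 3 + RatFunc.X + 1 : RatFunc (ZMod 2)) = algebraMap _ _ pB := by
    simp [pB]
  have hC : (RatFunc.X ^ 4 + RatFunc.X + 1 : RatFunc (ZMod 2)) = algebraMap _ _ pC := by
    simp [pC]
  rw [hB, hC] at hf
  set φ := algebraMap (ZMod 2)[X] (RatFunc (ZMod 2)) with hφ
  have h2K : (2 : RatFunc (ZMod 2)) = 0 := two_eq_zero_of_algebra
  have h2L : (2 : AdjoinRoot f) = 0 := two_eq_zero_of_algebra
  have hd : f.natDegree = 2 := by rw [hf]; compute_degree!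
  have hm : f.Monic := by rw [hf]; monicity!
  have hder : derivative f ≠ 0 := by
    have : derivative f = C (φ pB) := by
      rw [hf]
      simpa [one_add_one_eq_two] using h2K
    rw [this, Ne, C_eq_zero, map_eq_zero_iff _ hinj]
    exact pB_ne_zero
  have := isSeparable_adjoinRoot f hder
  have : FunctionField (ZMod 2) (AdjoinRoot f) := (AdjoinRoot.powerBasis' hm).finite
  have hofφ : ∀ a, AdjoinRoot.of f (φ a) = algebraMap (ZMod 2)[X] (AdjoinRoot f) a := fun a =>
    (IsScalarTower.algebraMap_apply (ZMod 2)[X] (RatFunc (ZMod 2)) (AdjoinRoot f) a).symm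
  set r := AdjoinRoot.root f with hr
  have heval : ∀ x, eval₂ (AdjoinRoot.of f) x f =
      x ^ 2 + AdjoinRoot.of f (φ pB) * x - AdjoinRoot.of f (φ (pB * pC)) := fun x =>
    (congrArg (eval₂ (AdjoinRoot.of f) x) hf).trans (by
      simp only [eval₂_add, eval₂_sub, eval₂_mul, eval₂_pow, eval₂_X, eval₂_C, map_mul])
  have hroot : r ^ 2 = AdjoinRoot.of f (φ pB) * r + AdjoinRoot.of f (φ (pB * pC)) := by
    have h := (heval r).symm.trans (AdjoinRoot.eval₂_root f)
    linear_combination h + (- AdjoinRoot.of f (φ pB) * r) * h2L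
  -- The nontrivial automorphism of the quadratic extension.
  let σ : AdjoinRoot f →ₐ[RatFunc (ZMod 2)] AdjoinRoot f :=
    AdjoinRoot.liftAlgHom f (Algebra.ofId _ _) (r + AdjoinRoot.of f (φ pB)) (by
      refine (heval _).trans ?_
      linear_combination hroot +
        (AdjoinRoot.of f (φ pB) ^ 2 + 2 * AdjoinRoot.of f (φ pB) * r) * h2L)
  have hσr : σ r = r + AdjoinRoot.of f (φ pB) := AdjoinRoot.liftAlgHom_root ..
  have hσ : ∀ p q, σ (AdjoinRoot.of f p + AdjoinRoot.of f q * r) =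
      AdjoinRoot.of f p + AdjoinRoot.of f q * (r + AdjoinRoot.of f (φ pB)) := by
    intro p q
    rw [map_add, map_mul, hσr]
    congr 1
    · exact σ.commutes p
    · congr 1; exact σ.commutes q
  have hrint : IsIntegral (ZMod 2)[X] r := by
    refine ⟨X ^ 2 + (C pB * X + C (pB * pC)), monic_X_pow_add (by compute_degree!), ?_⟩
    simp only [eval₂_add, eval₂_mul, eval₂_pow, eval₂_X, eval₂_C, ← hofφ, hroot]
    linear_combination (AdjoinRoot.of f (φ pB) * r + AdjoinRoot.of f (φ (pB * pC))) * h2L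
  let y : FunctionField.ringOfIntegers (ZMod 2) (AdjoinRoot f) := ⟨r, hrint⟩
  have hcoe : ∀ a b : (ZMod 2)[X],
      ((algebraMap (ZMod 2)[X] (FunctionField.ringOfIntegers (ZMod 2) (AdjoinRoot f)) a
        + algebraMap (ZMod 2)[X] (FunctionField.ringOfIntegers (ZMod 2) (AdjoinRoot f)) b * y :
        FunctionField.ringOfIntegers (ZMod 2) (AdjoinRoot f)) : AdjoinRoot f)
        = AdjoinRoot.of f (φ a) + AdjoinRoot.of f (φ b) * r := fun a b => by
    rw [hofφ, hofφ]; rfl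
  have H : IsModel (FunctionField.ringOfIntegers (ZMod 2) (AdjoinRoot f)) y := by
    refine ⟨?_, ?_, ?_⟩
    · apply Subtype.ext
      rw [add_comm, hcoe, add_comm, ← hroot]
      rfl
    · rintro ⟨z, hz⟩
      have hz : IsIntegral (ZMod 2)[X] z := hz
      obtain ⟨p, q, rfl⟩ := adjoinRoot_rep f hm hd z
      have hz' := hz.map (σ.restrictScalars (ZMod 2)[X])
      rw [AlgHom.restrictScalars_apply, hσ] at hz'
      have hof : ∀ w, IsIntegral (ZMod 2)[X] (AdjoinRoot.of f w) → IsIntegral (ZMod 2)[X] w :=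
        fun w hw => (isIntegral_algebraMap_iff
          (FaithfulSMul.algebraMap_injective (RatFunc (ZMod 2)) (AdjoinRoot f))).1 hw
      have htr := hz.add hz'
      have hno := hz.mul hz'
      rw [show _ + _ = AdjoinRoot.of f (φ pB * q) by
        rw [map_mul]
        linear_combination (AdjoinRoot.of f p + AdjoinRoot.of f q * r) * h2L] at htr
      rw [show _ * _ = AdjoinRoot.of f (p ^ 2 + p * q * φ pB + q ^ 2 * φ (pB * pC)) by
        simp only [map_add, map_mul, map_pow] at hroot ⊢
        linear_combination AdjoinRoot.of f q ^ 2 * hroot +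
          (AdjoinRoot.of f p * AdjoinRoot.of f q * r +
            AdjoinRoot.of f q ^ 2 * r * AdjoinRoot.of f (φ pB)) * h2L] at hno
      obtain ⟨a, b, rfl, rfl⟩ := exists_poly_of_isIntegral (hof _ htr) (hof _ hno)
      exact ⟨a, b, Subtype.ext (hcoe a b).symm⟩
    · intro a b h
      have h' := congrArg Subtype.val h
      rw [hcoe] at h'
      obtain ⟨h1, h2⟩ := adjoinRoot_indep f hd h'
      exact ⟨(map_eq_zero_iff _ hinj).1 h1, (map_eq_zero_iff _ hinj).1 h2⟩
  exact H.card_classGroup
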